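/- arXiv:1509.04088 — 2 statements merged into one kernel-verified Lean document; each statement's English description precedes it below -/
import Mathlib

section
/- Let S be a finite semigroup, δ the homomorphism from nonempty words over a finite alphabet A to S induced by a map A → S, and k > |S|. Let a_1⋯a_n be a word over A with n ≥ k+1. For each ℓ ∈ {1,…,n−k+1}, let j_ℓ ∈ {ℓ+1,…,ℓ+k−1} be the minimum index j > ℓ such that δ(a_ℓ⋯a_{i−1}) = δ(a_ℓ⋯a_j) for some i ∈ {ℓ+1,…,j} (this minimum exists and satisfies j_ℓ ≤ ℓ+k−1). Then j_ℓ ≤ j_{ℓ+1} for every ℓ ∈ {1,…,n−k}. -/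
/-- `sprod f a b` is the product `f a * f (a+1) * ⋯ * f b` in a semigroup (for `a ≤ b`). -/
def sprod {S : Type*} [Semigroup S] (f : ℕ → S) (a b : ℕ) : S :=
  (List.range (b - a)).foldl (fun x r => x * f (a + r + 1)) (f a)

/-!
Multiplying on the left by `f ℓ` turns an equality between two prefix products starting at `ℓ + 1`
into one between the corresponding prefix products starting at `ℓ`. Hence the set of repeat
positions shrinks as the starting point moves right, and its minimum can only grow. The pigeonhole
principle places a repeat, and therefore the minimum, inside the window, so cutting the set down to
the window does not change its minimum.
-/

/-- The positions `j` at which the products of the prefixes of `f ℓ, f (ℓ + 1), …` repeat an earlier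
value. An earlier prefix is recorded, as in the definition of `j_ℓ`, by the position `i` just after
its end. -/
def prefixRepeats {S : Type*} [Semigroup S] (f : ℕ → S) (ℓ : ℕ) : Set ℕ :=
  {j | ∃ i, ℓ + 1 ≤ i ∧ i ≤ j ∧ sprod f ℓ (i - 1) = sprod f ℓ j}

/-- The positions of `prefixRepeats f ℓ` inside the window of length `k` starting at `ℓ`; for
`k > |S|` their minimum is `j_ℓ`. -/
def windowRepeats {S : Type*} [Semigroup S] (f : ℕ → S) (k ℓ : ℕ) : Set ℕ :=
  {j | ℓ + 1 ≤ j ∧ j ≤ ℓ + k - 1 ∧ j ∈ prefixRepeats f ℓ}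

section

variable {S : Type*} [Semigroup S] (f : ℕ → S)

theorem sprod_self (a : ℕ) : sprod f a a = f a := by
  simp [sprod]

theorem sprod_succ_right {a b : ℕ} (hab : a ≤ b) :
    sprod f a (b + 1) = sprod f a b * f (b + 1) := by
  simp [sprod, Nat.succ_sub hab, List.range_succ, hab]

theorem sprod_mul_sprod {a b c : ℕ} (hab : a ≤ b) (hbc : b < c) :
    sprod f a b * sprod f (b + 1) c = sprod f a c := by
  induction c, hbc using Nat.le_induction with
  | base => rw [sprod_self, sprod_succ_right f hab]
  | succ c hbc ih =>
    rw [sprod_succ_right f hbc, ← mul_assoc, ih, sprod_succ_right f (by omega)]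

theorem antitone_prefixRepeats : Antitone (prefixRepeats f) := by
  refine antitone_nat_of_succ_le fun ℓ j ⟨i, hℓi, hij, heq⟩ => ⟨i, by omega, hij, ?_⟩
  rw [← sprod_mul_sprod f le_rfl (by omega : ℓ < i - 1), heq,
    sprod_mul_sprod f le_rfl (by omega : ℓ < j)]

theorem exists_mem_prefixRepeats_le [Fintype S] (ℓ : ℕ) :
    ∃ j ∈ prefixRepeats f ℓ, j ≤ ℓ + Fintype.card S := by
  obtain ⟨x, y, hne, heq⟩ := Fintype.exists_ne_map_eq_of_card_lt
    (fun r : Fin (Fintype.card S + 1) => sprod f ℓ (ℓ + r)) (by simp)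
  wlog hxy : x < y generalizing x y
  · exact this y x hne.symm heq.symm (hne.lt_or_gt.resolve_left hxy)
  exact ⟨ℓ + y, ⟨ℓ + x + 1, by omega, by omega, heq⟩, by omega⟩

theorem windowRepeats_subset_prefixRepeats (k ℓ : ℕ) :
    windowRepeats f k ℓ ⊆ prefixRepeats f ℓ :=
  fun _ hj => hj.2.2

theorem windowRepeats_nonempty [Fintype S] {k : ℕ} (hk : Fintype.card S < k) (ℓ : ℕ) :
    (windowRepeats f k ℓ).Nonempty := by
  obtain ⟨j, ⟨i, hℓi, hij, heq⟩, hjℓ⟩ := exists_mem_prefixRepeats_le f ℓ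
  exact ⟨j, hℓi.trans hij, by omega, i, hℓi, hij, heq⟩

variable {f}

theorem sInf_windowRepeats {k ℓ : ℕ} (hne : (windowRepeats f k ℓ).Nonempty) :
    sInf (windowRepeats f k ℓ) = sInf (prefixRepeats f ℓ) := by
  have hsub := windowRepeats_subset_prefixRepeats f k ℓ
  have hmin : sInf (prefixRepeats f ℓ) ∈ prefixRepeats f ℓ := Nat.sInf_mem (hne.mono hsub)
  refine le_antisymm (Nat.sInf_le ⟨?_, ?_, hmin⟩) (Nat.sInf_le (hsub (Nat.sInf_mem hne)))
  · obtain ⟨i, hℓi, hij, _⟩ := hmin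
    exact hℓi.trans hij
  · obtain ⟨j, hj⟩ := hne
    exact (Nat.sInf_le (hsub hj)).trans hj.2.1

end

theorem statement2_general {S : Type*} [Semigroup S] [Fintype S] (f : ℕ → S) {k : ℕ}
    (hk : Fintype.card S < k) :
    (∀ ℓ, (windowRepeats f k ℓ).Nonempty) ∧ Monotone fun ℓ => sInf (windowRepeats f k ℓ) := by
  have hne := windowRepeats_nonempty f hk
  refine ⟨hne, fun ℓ ℓ' hℓ => ?_⟩
  have hne' : (prefixRepeats f ℓ').Nonempty :=
    (hne ℓ').mono (windowRepeats_subset_prefixRepeats f k ℓ')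
  simpa only [sInf_windowRepeats (hne _)] using
    Nat.sInf_le (antitone_prefixRepeats f hℓ (Nat.sInf_mem hne'))

/-- For a finite semigroup `S`, `δ` induced by `φ : A → S`, `k > |S|` and a word
`a 1 ⋯ a n` with `n ≥ k+1`: for each `ℓ ∈ {1,…,n-k+1}` the set
`J ℓ = {j : ℓ+1 ≤ j ≤ ℓ+k-1, ∃ i ∈ {ℓ+1,…,j}, δ(a ℓ ⋯ a (i-1)) = δ(a ℓ ⋯ a j)}` is nonempty
(so its minimum `j_ℓ = sInf (J ℓ)` exists and is at most `ℓ+k-1`), and `j_ℓ ≤ j_{ℓ+1}` for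
every `ℓ ∈ {1,…,n-k}`. -/
theorem statement2 {A S : Type*} [Fintype A] [Semigroup S] [Fintype S]
    (φ : A → S) {k n : ℕ} (hk : Fintype.card S < k) (hn : k + 1 ≤ n) (a : ℕ → A) :
    let f : ℕ → S := fun p => φ (a p)
    let J : ℕ → Set ℕ := fun ℓ =>
      {j | ℓ + 1 ≤ j ∧ j ≤ ℓ + k - 1 ∧
        ∃ i, ℓ + 1 ≤ i ∧ i ≤ j ∧ sprod f ℓ (i - 1) = sprod f ℓ j}
    (∀ ℓ, 1 ≤ ℓ → ℓ ≤ n - k + 1 → (J ℓ).Nonempty) ∧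
      ∀ ℓ, 1 ≤ ℓ → ℓ ≤ n - k → sInf (J ℓ) ≤ sInf (J (ℓ + 1)) := by
  obtain ⟨hne, hmono⟩ := statement2_general (fun p => φ (a p)) hk
  exact ⟨fun ℓ _ _ => hne ℓ, fun ℓ _ _ => hmono ℓ.le_succ⟩
end

section
/- Let A be a finite alphabet and k ≥ 1. For all nonempty words u, v over A, β'_A(uv) = β'_A(u) ++ α_{t_k(u)}(β'_A(v)), where α_{t_k(u)} is applied letterwise and ++ denotes concatenation. -/
/-- `tk k w` is the longest suffix of the word `w` of length at most `k`. -/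
def tk {A : Type*} (k : ℕ) (w : List A) : List A := w.drop (w.length - k)

/-- Auxiliary function: `betaAux k pre w` is the word over `B_k = A* × A` whose `p`-th
letter is `(tk k (pre ++ (first p-1 letters of w)), p-th letter of w)`. -/
def betaAux {A : Type*} (k : ℕ) : List A → List A → List (List A × A)
  | _, [] => []
  | pre, a :: w => (tk k pre, a) :: betaAux k (pre ++ [a]) w

/-- `betak k w` is the word `β'_A(w)` over `B_k` whose `p`-th letter is
`(tk k (a 1 ⋯ a (p-1)), a p)` for `w = a 1 ⋯ a n`. -/
def betak {A : Type*} (k : ℕ) (w : List A) : List (List A × A) := betaAux k [] w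

/-- `alphak k w` is the map `α_w : B_k → B_k`, `(w', a) ↦ (tk k (w ++ w'), a)`. -/
def alphak {A : Type*} (k : ℕ) (w : List A) (b : List A × A) : List A × A :=
  (tk k (w ++ b.1), b.2)

/-!
The word `betaAux k p w` reads `w` after the past `p`, so reading `u ++ v` means reading `u` and
then `v` after the past `u`. Putting `u` in front of a past replaces each recorded suffix
`tk k p` by `tk k (u ++ p)`, and the latter depends on `u` and `p` only through `tk k u` and
`tk k p`; this replacement is the letterwise action of `alphak k (tk k u)`.
-/

section

variable {A : Type*} (k : ℕ)

theorem tk_eq_reverse_take_reverse (w : List A) : tk k w = (w.reverse.take k).reverse :=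
  List.rtake_eq_reverse_take_reverse w k

theorem tk_append (u v : List A) : tk k (u ++ v) = tk (k - v.length) u ++ tk k v := by
  simp only [tk_eq_reverse_take_reverse, List.reverse_append, List.take_append,
    List.length_reverse]

theorem tk_tk (m n : ℕ) (w : List A) : tk m (tk n w) = tk (min m n) w := by
  simp only [tk_eq_reverse_take_reverse, List.reverse_reverse, List.take_take]

theorem length_tk (w : List A) : (tk k w).length = min k w.length := by
  simp only [tk_eq_reverse_take_reverse, List.length_reverse, List.length_take]

theorem tk_tk_append_tk (u v : List A) : tk k (tk k u ++ tk k v) = tk k (u ++ v) := by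
  have remaining_length : min (k - min k v.length) k = k - v.length := by omega
  calc
    tk k (tk k u ++ tk k v) = tk (min (k - min k v.length) k) u ++ tk k v := by
      rw [tk_append, tk_tk, tk_tk, length_tk, min_self]
    _ = tk (k - v.length) u ++ tk k v := by rw [remaining_length]
    _ = tk k (u ++ v) := (tk_append k u v).symm

theorem betaAux_append (p u v : List A) :
    betaAux k p (u ++ v) = betaAux k p u ++ betaAux k (p ++ u) v := by
  induction u generalizing p with
  | nil => simp only [betaAux, List.nil_append, List.append_nil]
  | cons a u ih =>
    simp only [betaAux, ih, List.cons_append, List.append_assoc, List.nil_append]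

theorem alphak_tk_mk_tk (u p : List A) (a : A) :
    alphak k (tk k u) (tk k p, a) = (tk k (u ++ p), a) := by
  rw [alphak, tk_tk_append_tk]

theorem map_alphak_tk_betaAux (u p v : List A) :
    (betaAux k p v).map (alphak k (tk k u)) = betaAux k (u ++ p) v := by
  induction v generalizing p with
  | nil => rfl
  | cons a v ih =>
    rw [betaAux, betaAux, List.map_cons, alphak_tk_mk_tk, ih, List.append_assoc]

theorem statement10_general (u v : List A) :
    betak k (u ++ v) = betak k u ++ (betak k v).map (alphak k (tk k u)) := by
  simp only [betak, betaAux_append, map_alphak_tk_betaAux, List.nil_append, List.append_nil]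

end

/-- For all nonempty words `u, v` over `A`:
`β'_A(uv) = β'_A(u) ++ α_{tk k u}(β'_A(v))`, with `α` applied letterwise. -/
theorem statement10 {A : Type*} [Fintype A] {k : ℕ} (hk : 1 ≤ k)
    (u v : List A) (hu : u ≠ []) (hv : v ≠ []) :
    betak k (u ++ v) = betak k u ++ (betak k v).map (alphak k (tk k u)) :=
  statement10_general k u v
end
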